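/- For all nonnegative integers n and m such that n − m is odd or |n − m| ≥ 5, one has ∫_ℝ 𝕋_n'(x) 𝕋_m'(x) dx = 0; consequently the stiffness matrix S = (∫_ℝ 𝕋_n' 𝕋_m' dx)_{n,m} has at most nine nonzero diagonals. -/

import Mathlib

open MeasureTheory Real

/-- `c 0 = 2`, `c n = 1` for `n ≥ 1`. -/
noncomputable def cCheb (n : ℕ) : ℝ := if n = 0 then 2 else 1

/-- The mapped Chebyshev functions (MCFs). -/
noncomputable def MCF (n : ℕ) (x : ℝ) : ℝ :=
  (Real.sqrt (cCheb n * Real.pi / 2))⁻¹ * (Real.sqrt (1 + x ^ 2))⁻¹ *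
    (Polynomial.Chebyshev.T ℝ n).eval (x / Real.sqrt (1 + x ^ 2))

/-!
Substitute `x = cot θ` with `θ = π / 2 - arctan x ∈ (0, π)`. Then `1 / √(1 + x²) = sin θ` and
`x / √(1 + x²) = cos θ`, so `MCF n x` is a constant times `sin θ cos (n θ)`, and `dθ = -sin² θ dx`.
The stiffness integral becomes, up to a constant, the integral over `(0, π)` of
`sin² θ · (sin θ cos (n θ))' · (sin θ cos (m θ))'`. Each derivative is a combination of
`cos ((n ± 1) θ)`, resp. `cos ((m ± 1) θ)`, so by product-to-sum the integrand is a combination of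
`cos (k θ)` with `k ∈ n ± m + {0, ±2, ±4}`. The hypothesis excludes `k = 0`, and
`∫ θ in 0..π, cos (k θ) = 0` for every nonzero integer `k`.
-/

lemma integral_cos_int_mul {k : ℤ} (hk : k ≠ 0) : ∫ t in (0 : ℝ)..π, cos (k * t) = 0 := by
  have hk' : (k : ℝ) ≠ 0 := by exact_mod_cast hk
  rw [intervalIntegral.integral_comp_mul_left (fun t => cos t) hk']
  simp [integral_cos, sin_int_mul_pi]

/-- The integrand is a combination of `cos (k t)` with `k ∈ a ± b + {0, ±2}`. -/
lemma integral_sin_sq_mul_cos_mul_cos {a b : ℤ}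
    (h1 : a + b ≠ 0) (h2 : a + b + 2 ≠ 0) (h3 : a + b - 2 ≠ 0)
    (h4 : a - b ≠ 0) (h5 : a - b + 2 ≠ 0) (h6 : a - b - 2 ≠ 0) :
    ∫ t in (0 : ℝ)..π, sin t ^ 2 * (cos (a * t) * cos (b * t)) = 0 := by
  have key : ∀ t : ℝ, sin t ^ 2 * (cos (a * t) * cos (b * t)) =
      1 / 4 * cos ((a + b : ℤ) * t) + 1 / 4 * cos ((a - b : ℤ) * t)
      - 1 / 8 * cos ((a + b + 2 : ℤ) * t) - 1 / 8 * cos ((a + b - 2 : ℤ) * t)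
      - 1 / 8 * cos ((a - b + 2 : ℤ) * t) - 1 / 8 * cos ((a - b - 2 : ℤ) * t) := by
    intro t
    push_cast
    simp only [add_mul, sub_mul, cos_add, cos_sub, sin_add, sin_sub, cos_two_mul]
    rw [sin_sq]
    ring
  simp_rw [key]
  rw [intervalIntegral.integral_sub, intervalIntegral.integral_sub, intervalIntegral.integral_sub,
    intervalIntegral.integral_sub, intervalIntegral.integral_add]
  · simp only [intervalIntegral.integral_const_mul, integral_cos_int_mul h1,
      integral_cos_int_mul h2, integral_cos_int_mul h3, integral_cos_int_mul h4,
      integral_cos_int_mul h5, integral_cos_int_mul h6]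
    simp
  all_goals exact Continuous.intervalIntegrable (by fun_prop) _ _

/-- The derivative of `t ↦ sin t * cos (n * t)`, in product-to-sum form. -/
noncomputable def trigDeriv (n : ℕ) (t : ℝ) : ℝ :=
  ((n + 1) * cos ((n + 1 : ℤ) * t) - (n - 1) * cos ((n - 1 : ℤ) * t)) / 2

lemma hasDerivAt_sin_mul_cos (n : ℕ) (t : ℝ) :
    HasDerivAt (fun t : ℝ => sin t * cos (n * t)) (trigDeriv n t) t := by
  have h1 : HasDerivAt (fun t : ℝ => (n : ℝ) * t) n t := by
    simpa using (hasDerivAt_id t).const_mul (n : ℝ)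
  refine ((hasDerivAt_sin t).mul h1.cos).congr_deriv ?_
  unfold trigDeriv
  push_cast
  simp only [add_mul, sub_mul, one_mul, cos_add, cos_sub]
  ring

lemma MCF_eq (n : ℕ) : MCF n = fun x => (√(cCheb n * π / 2))⁻¹ *
    (sin (π / 2 - arctan x) * cos (n * (π / 2 - arctan x))) := by
  funext x
  have h := Polynomial.Chebyshev.T_real_cos (π / 2 - arctan x) n
  rw [cos_pi_div_two_sub, sin_arctan] at h
  rw [MCF, h, sin_pi_div_two_sub, cos_arctan]
  push_cast
  ring

lemma hasDerivAt_angle (x : ℝ) :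
    HasDerivAt (fun x => π / 2 - arctan x) (-(1 / (1 + x ^ 2))) x :=
  (hasDerivAt_arctan x).const_sub _

lemma deriv_MCF (n : ℕ) (x : ℝ) : deriv (MCF n) x = (√(cCheb n * π / 2))⁻¹ *
    (trigDeriv n (π / 2 - arctan x) * -(1 / (1 + x ^ 2))) := by
  rw [MCF_eq]
  exact (((hasDerivAt_sin_mul_cos n _).comp x (hasDerivAt_angle x)).const_mul _).deriv

lemma image_angle : (fun x => π / 2 - arctan x) '' Set.univ = Set.Ioo 0 π := by
  ext t
  simp only [Set.image_univ, Set.mem_range, Set.mem_Ioo]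
  constructor
  · rintro ⟨x, rfl⟩
    have := arctan_lt_pi_div_two x
    have := neg_pi_div_two_lt_arctan x
    constructor <;> linarith
  · rintro ⟨h0, h1⟩
    refine ⟨tan (π / 2 - t), ?_⟩
    rw [arctan_tan (by linarith) (by linarith)]
    ring

/-- Change of variables `x = cot t`, whose Jacobian is `-dt/dx = 1 / (1 + x ^ 2)`. -/
lemma integral_comp_angle (H : ℝ → ℝ) :
    ∫ x : ℝ, 1 / (1 + x ^ 2) * H (π / 2 - arctan x) = ∫ t in (0 : ℝ)..π, H t := by
  have h := integral_image_eq_integral_abs_deriv_smul MeasurableSet.univ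
    (fun x _ => (hasDerivAt_angle x).hasDerivWithinAt)
    (fun x _ y _ hxy => arctan_injective (sub_right_injective hxy)) H
  rw [image_angle, setIntegral_univ] at h
  rw [intervalIntegral.integral_of_le pi_pos.le, integral_Ioc_eq_integral_Ioo, h]
  congr 1
  funext x
  rw [abs_neg, abs_of_pos (by positivity), smul_eq_mul]

lemma integral_trigDeriv (n m : ℕ) (h : Odd ((n : ℤ) - m) ∨ 5 ≤ |(n : ℤ) - m|) :
    ∫ t in (0 : ℝ)..π, sin t ^ 2 * (trigDeriv n t * trigDeriv m t) = 0 := by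
  -- No frequency `n ± m + j` with `j` even and `|j| ≤ 4` vanishes.
  have hne : ∀ j : ℤ, -2 ≤ j → j ≤ 2 →
      (n : ℤ) - m + 2 * j ≠ 0 ∧ (n : ℤ) + m + 2 * j ≠ 0 := by
    intro j _ _
    rw [le_abs] at h
    rcases h with ⟨r, hr⟩ | h | h <;> constructor <;> omega
  have hJ : ∀ a b : ℤ, (a = n + 1 ∨ a = n - 1) → (b = m + 1 ∨ b = m - 1) →
      ∫ t in (0 : ℝ)..π, sin t ^ 2 * (cos (a * t) * cos (b * t)) = 0 := by
    intro a b ha hb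
    have e1 := hne (-2) (by norm_num) (by norm_num)
    have e2 := hne (-1) (by norm_num) (by norm_num)
    have e3 := hne 0 (by norm_num) (by norm_num)
    have e4 := hne 1 (by norm_num) (by norm_num)
    have e5 := hne 2 (by norm_num) (by norm_num)
    apply integral_sin_sq_mul_cos_mul_cos <;> omega
  have key : ∀ t : ℝ, sin t ^ 2 * (trigDeriv n t * trigDeriv m t) =
      ((n + 1) * (m + 1) / 4 : ℝ) *
        (sin t ^ 2 * (cos ((n + 1 : ℤ) * t) * cos ((m + 1 : ℤ) * t)))
      - ((n + 1) * (m - 1) / 4 : ℝ) *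
        (sin t ^ 2 * (cos ((n + 1 : ℤ) * t) * cos ((m - 1 : ℤ) * t)))
      - ((n - 1) * (m + 1) / 4 : ℝ) *
        (sin t ^ 2 * (cos ((n - 1 : ℤ) * t) * cos ((m + 1 : ℤ) * t)))
      + ((n - 1) * (m - 1) / 4 : ℝ) *
        (sin t ^ 2 * (cos ((n - 1 : ℤ) * t) * cos ((m - 1 : ℤ) * t))) := by
    intro t
    unfold trigDeriv
    ring
  simp_rw [key]
  rw [intervalIntegral.integral_add, intervalIntegral.integral_sub, intervalIntegral.integral_sub]
  · simp only [intervalIntegral.integral_const_mul]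
    rw [hJ _ _ (.inl rfl) (.inl rfl), hJ _ _ (.inl rfl) (.inr rfl),
      hJ _ _ (.inr rfl) (.inl rfl), hJ _ _ (.inr rfl) (.inr rfl)]
    simp
  all_goals exact Continuous.intervalIntegrable (by fun_prop) _ _

/-- If `n − m` is odd or `|n − m| ≥ 5`, then `∫_ℝ 𝕋_n' 𝕋_m' dx = 0`;
hence the stiffness matrix has at most nine nonzero diagonals. -/
theorem MCF_stiffness_vanishing (n m : ℕ)
    (h : Odd ((n : ℤ) - m) ∨ 5 ≤ |(n : ℤ) - m|) :
    ∫ x : ℝ, deriv (MCF n) x * deriv (MCF m) x = 0 := by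
  have key : ∀ x : ℝ, deriv (MCF n) x * deriv (MCF m) x =
      ((√(cCheb n * π / 2))⁻¹ * (√(cCheb m * π / 2))⁻¹) * (1 / (1 + x ^ 2) *
        (fun t => sin t ^ 2 * (trigDeriv n t * trigDeriv m t)) (π / 2 - arctan x)) := by
    intro x
    simp only [deriv_MCF, sin_pi_div_two_sub, cos_sq_arctan]
    ring
  rw [integral_congr_ae (.of_forall key), integral_const_mul,
    integral_comp_angle (fun t => sin t ^ 2 * (trigDeriv n t * trigDeriv m t)),
    integral_trigDeriv n m h, mul_zero]
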